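/- Let f : [0,1]^2 → ℝ be continuous and monotone (i.e. every level set f⁻¹(t) is connected). Then the set S \ E^* has two-dimensional Lebesgue measure zero, where S is the critical set of f and E^* is the union over all t ∈ ℝ of the connected components of positive length of the level sets f⁻¹(t). -/

import Mathlib

/-!
Off `E*` a level set is connected of length zero, hence a single point. Deleting a point `x` leaves
the square connected, as it is convex and not contained in a line, so if `f` took both smaller and
larger values than `f x`, it would take the value `f x` a second time. Hence every point of the
square off `E*`, critical or not, is the unique minimum or the unique maximum of `f`: there are at
most two of them.
-/

open MeasureTheory Set

noncomputable section

/-- The unit square `[0,1]²` in the Euclidean plane. -/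
def unitSquare : Set (EuclideanSpace ℝ (Fin 2)) := {x | ∀ i, x i ∈ Set.Icc (0:ℝ) 1}

/-- The critical set of `f : [0,1]² → ℝ`: points of the square where `f` is either not
differentiable or has vanishing gradient. -/
def critSet (f : EuclideanSpace ℝ (Fin 2) → ℝ) : Set (EuclideanSpace ℝ (Fin 2)) :=
  {x | x ∈ unitSquare ∧
    (¬ DifferentiableWithinAt ℝ f unitSquare x ∨ fderivWithin ℝ f unitSquare x = 0)}

/-- The set `E* = ⋃ₜ Eₜ*`: the union over `t` of all connected components of the level set
`Eₜ = {f = t}` having strictly positive one-dimensional Hausdorff measure. -/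
def Estar (f : EuclideanSpace ℝ (Fin 2) → ℝ) : Set (EuclideanSpace ℝ (Fin 2)) :=
  {x | 0 < μH[1] (connectedComponentIn (unitSquare ∩ f ⁻¹' {f x}) x)}

section HausdorffMeasure

variable {X : Type*} [MetricSpace X] [MeasurableSpace X] [BorelSpace X] {s : Set X}

lemma edist_le_hausdorffMeasure_one_of_isPreconnected (hs : IsPreconnected s) {x y : X}
    (hx : x ∈ s) (hy : y ∈ s) : edist x y ≤ μH[1] s := by
  have hlip : LipschitzOnWith 1 (dist x) s := (LipschitzWith.dist_right x).lipschitzOnWith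
  have hIcc : Icc (dist x x) (dist x y) ⊆ dist x '' s :=
    hs.intermediate_value hx hy hlip.continuousOn
  calc edist x y = μH[1] (Icc (dist x x) (dist x y)) := by
        rw [hausdorffMeasure_real, Real.volume_Icc, dist_self, sub_zero, edist_dist]
    _ ≤ μH[1] (dist x '' s) := measure_mono hIcc
    _ ≤ μH[1] s := by simpa using hlip.hausdorffMeasure_image_le zero_le_one

lemma subsingleton_of_isPreconnected_of_hausdorffMeasure_one_eq_zero (hs : IsPreconnected s)
    (h0 : μH[1] s = 0) : s.Subsingleton := fun _ hx _ hy ↦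
  edist_le_zero.1 (h0 ▸ edist_le_hausdorffMeasure_one_of_isPreconnected hs hx hy)

end HausdorffMeasure

section SingletonFibers

variable {X α : Type*} {f : X → α} {s : Set X}

lemma isMinOn_or_isMaxOn_of_subsingleton_fiber [TopologicalSpace X] [LinearOrder α]
    [TopologicalSpace α] [OrderClosedTopology α] {x : X} (hs : IsPreconnected (s \ {x}))
    (hf : ContinuousOn f s) (hx : x ∈ s) (hfib : (s ∩ f ⁻¹' {f x}).Subsingleton) :
    IsMinOn f s x ∨ IsMaxOn f s x := by
  by_contra! h
  simp only [isMinOn_iff, isMaxOn_iff, not_forall, not_le] at h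
  obtain ⟨⟨a, ha, hax⟩, ⟨b, hb, hxb⟩⟩ := h
  obtain ⟨y, ⟨hy, hyx⟩, hfy⟩ : f x ∈ f '' (s \ {x}) :=
    hs.intermediate_value ⟨ha, ne_of_apply_ne f hax.ne⟩ ⟨hb, ne_of_apply_ne f hxb.ne'⟩
      (hf.mono sdiff_subset) ⟨hax.le, hxb.le⟩
  exact hyx (hfib ⟨hy, hfy⟩ ⟨hx, rfl⟩)

lemma encard_extrema_with_subsingleton_fiber_le_two [PartialOrder α] :
    {x ∈ s | (s ∩ f ⁻¹' {f x}).Subsingleton ∧ (IsMinOn f s x ∨ IsMaxOn f s x)}.encard ≤ 2 := by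
  have hmin : {x ∈ s | (s ∩ f ⁻¹' {f x}).Subsingleton ∧ IsMinOn f s x}.Subsingleton :=
    fun x ⟨hx, _, hxmin⟩ y ⟨hy, hyfib, hymin⟩ ↦
      hyfib ⟨hx, le_antisymm (hxmin hy) (hymin hx)⟩ ⟨hy, rfl⟩
  have hmax : {x ∈ s | (s ∩ f ⁻¹' {f x}).Subsingleton ∧ IsMaxOn f s x}.Subsingleton :=
    fun x ⟨hx, _, hxmax⟩ y ⟨hy, hyfib, hymax⟩ ↦
      hyfib ⟨hx, le_antisymm (hymax hx) (hxmax hy)⟩ ⟨hy, rfl⟩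
  simp only [and_or_left, ofPred_or]
  calc _ ≤ _ := encard_union_le _ _
    _ ≤ 1 + 1 := add_le_add (encard_le_one_iff_subsingleton.2 hmin)
        (encard_le_one_iff_subsingleton.2 hmax)
    _ = 2 := one_add_one_eq_two

end SingletonFibers

lemma exists_mem_notMem_affineSpan_pair_of_not_collinear {k V P : Type*} [DivisionRing k]
    [AddCommGroup V] [Module k V] [AddTorsor V P] {s : Set P} (hs : ¬ Collinear k s) (x y : P) :
    ∃ z ∈ s, z ∉ line[k, x, y] := by
  by_contra! hline
  have hspan : vectorSpan k s ≤ vectorSpan k {x, y} := by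
    simpa only [direction_affineSpan] using AffineSubspace.direction_le (affineSpan_le.2 hline)
  exact hs ((Submodule.rank_mono hspan).trans (collinear_pair k x y))

lemma isPreconnected_sdiff_singleton_of_convex_of_not_collinear {E : Type*} [AddCommGroup E]
    [Module ℝ E] [TopologicalSpace E] [ContinuousAdd E] [ContinuousSMul ℝ E] {s : Set E}
    (hs : Convex ℝ s) (hcol : ¬ Collinear ℝ s) (x : E) : IsPreconnected (s \ {x}) := by
  have segment_subset_sdiff {a b : E} (ha : a ∈ s) (hb : b ∈ s) (hx : x ∉ segment ℝ a b) :
      segment ℝ a b ⊆ s \ {x} :=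
    subset_sdiff_singleton (hs.segment_subset ha hb) hx
  refine isPreconnected_of_forall_pair fun a ⟨ha, hax⟩ b ⟨hb, hbx⟩ ↦ ?_
  by_cases hxab : x ∈ segment ℝ a b
  · have hb_line : b ∈ line[ℝ, a, x] :=
      (mem_segment_iff_wbtw.1 hxab).right_mem_affineSpan_of_left_ne hax
    obtain ⟨c, hc, hc_line⟩ :=
      exists_mem_notMem_affineSpan_pair_of_not_collinear hcol a x
    have hxac : x ∉ segment ℝ a c := fun h ↦
      hc_line ((mem_segment_iff_wbtw.1 h).right_mem_affineSpan_of_left_ne hax)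
    have hxcb : x ∉ segment ℝ c b := fun h ↦
      hc_line (affineSpan_pair_le_of_mem_of_mem hb_line (right_mem_affineSpan_pair ℝ a x)
        ((mem_segment_iff_wbtw.1 h).left_mem_affineSpan_of_right_ne hbx))
    exact ⟨segment ℝ a c ∪ segment ℝ c b,
      union_subset (segment_subset_sdiff ha hc hxac) (segment_subset_sdiff hc hb hxcb),
      .inl (left_mem_segment ℝ a c), .inr (right_mem_segment ℝ c b),
      (convex_segment a c).isPreconnected.union c (right_mem_segment ℝ a c)
        (left_mem_segment ℝ c b) (convex_segment c b).isPreconnected⟩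
  · exact ⟨segment ℝ a b, segment_subset_sdiff ha hb hxab, left_mem_segment ℝ a b,
      right_mem_segment ℝ a b, (convex_segment a b).isPreconnected⟩

lemma convex_unitSquare : Convex ℝ unitSquare := by
  intro x hx y hy a b ha hb hab i
  simpa using convex_Icc (0 : ℝ) 1 (hx i) (hy i) ha hb hab

lemma not_collinear_unitSquare : ¬ Collinear ℝ unitSquare := by
  have h0 : (0 : EuclideanSpace ℝ (Fin 2)) ∈ unitSquare := fun _ ↦ by simp
  have h1 : !₂[(1 : ℝ), 0] ∈ unitSquare := fun i ↦ by fin_cases i <;> simp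
  have h2 : !₂[(0 : ℝ), 1] ∈ unitSquare := fun i ↦ by fin_cases i <;> simp
  rw [collinear_iff_of_mem h0]
  rintro ⟨v, hv⟩
  obtain ⟨r, hr⟩ := hv _ h1
  obtain ⟨t, ht⟩ := hv _ h2
  have hr0 : 1 = r * v 0 := by simpa using congr($hr 0)
  have hr1 : 0 = r * v 1 := by simpa using congr($hr 1)
  have ht1 : 1 = t * v 1 := by simpa using congr($ht 1)
  have : (1 : ℝ) = 0 := by linear_combination hr0 + r * v 0 * ht1 - t * v 0 * hr1
  exact one_ne_zero this

lemma isPreconnected_unitSquare_sdiff_singleton (x : EuclideanSpace ℝ (Fin 2)) :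
    IsPreconnected (unitSquare \ {x}) :=
  isPreconnected_sdiff_singleton_of_convex_of_not_collinear convex_unitSquare
    not_collinear_unitSquare x

theorem critSet_diff_Estar_null_of_monotone_general {X α : Type*} [MetricSpace X]
    [MeasurableSpace X] [BorelSpace X] [LinearOrder α] [TopologicalSpace α] [OrderClosedTopology α]
    {s : Set X} (hs : ∀ x ∈ s, IsPreconnected (s \ {x})) {f : X → α} (hf : ContinuousOn f s)
    (hmono : ∀ t : α, IsPreconnected (s ∩ f ⁻¹' {t})) :
    {x ∈ s | μH[1] (connectedComponentIn (s ∩ f ⁻¹' {f x}) x) = 0}.encard ≤ 2 := by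
  refine (encard_extrema_with_subsingleton_fiber_le_two (f := f) (s := s)).trans'
    (encard_le_encard fun x ⟨hx, hlength⟩ ↦ ?_)
  rw [(hmono (f x)).connectedComponentIn ⟨hx, rfl⟩] at hlength
  have hfib : (s ∩ f ⁻¹' {f x}).Subsingleton :=
    subsingleton_of_isPreconnected_of_hausdorffMeasure_one_eq_zero (hmono (f x)) hlength
  exact ⟨hx, hfib, isMinOn_or_isMaxOn_of_subsingleton_fiber (hs x hx) hf hx hfib⟩

/-- If `f : [0,1]² → ℝ` is continuous and monotone (every level set is connected), then
`S \ E*` has two-dimensional Lebesgue measure zero. -/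
theorem critSet_diff_Estar_null_of_monotone (f : EuclideanSpace ℝ (Fin 2) → ℝ)
    (hf : ContinuousOn f unitSquare)
    (hmono : ∀ t : ℝ, IsPreconnected (unitSquare ∩ f ⁻¹' {t})) :
    volume (critSet f \ Estar f) = 0 := by
  have hcard := critSet_diff_Estar_null_of_monotone_general
    (fun x _ ↦ isPreconnected_unitSquare_sdiff_singleton x) hf hmono
  exact ((finite_of_encard_le_coe hcard).subset fun _ hx ↦
    ⟨hx.1.1, nonpos_iff_eq_zero.1 (not_lt.1 hx.2)⟩).measure_zero volume
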